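/- arXiv:2412.16338 — 3 statements merged into one kernel-verified Lean document; each statement's English description precedes it below -/
import Mathlib

section
/- If G : ℝ × (0,∞) → ℝ satisfies property (G1), then for j = 0, 1, 2 the j-th derivative ∂_ω^j Ĝ(·,1) belongs to L^∞(ℝ) and sup_{ω∈ℝ}(1+|ω|^q)|ω|²|∂_ω^j Ĝ(ω,1)| < ∞. -/
open MeasureTheory Filter Topology

noncomputable section

/-- Fourier transform, convention `f̂ ω = ∫ e^{-iωx} f x dx`. -/
def FT (f : ℝ → ℂ) (ω : ℝ) : ℂ :=
  ∫ x : ℝ, Complex.exp (-(Complex.I * ω * x)) * f x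

/-- Fourier transform of a real-valued function. -/
def FTr (f : ℝ → ℝ) : ℝ → ℂ := FT fun x => (f x : ℂ)

/-- The quantity whose supremum over `ω` defines the `B_q` norm. -/
def bqFun (q : ℝ) (f : ℝ → ℂ) (ω : ℝ) : ℝ :=
  (1 + |ω| ^ q) * (‖FT f ω‖ + ‖deriv (FT f) ω‖ + ‖deriv (deriv (FT f)) ω‖)

/-- The `B_q` norm `‖f‖ = sup_ω (1+|ω|^q)(|f̂(ω)|+|f̂′(ω)|+|f̂″(ω)|)`. -/
def bqNorm (q : ℝ) (f : ℝ → ℂ) : ℝ := ⨆ ω : ℝ, bqFun q f ω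

/-- The `B_q` norm of a real-valued function. -/
def bqNormR (q : ℝ) (f : ℝ → ℝ) : ℝ := bqNorm q fun x => (f x : ℂ)

/-- Membership in the space `B_q`: `f ∈ L¹`, `f̂ ∈ C²`, finite `B_q` norm. -/
def MemBq (q : ℝ) (f : ℝ → ℂ) : Prop :=
  Integrable f ∧ ContDiff ℝ 2 (FT f) ∧ BddAbove (Set.range (bqFun q f))

/-- Membership in `B_q` for a real-valued function. -/
def MemBqR (q : ℝ) (f : ℝ → ℝ) : Prop := MemBq q fun x => (f x : ℂ)

/-- Condition (G1): there is an integer `M > 0` such that `G(·,1) ∈ C^{q+2}` with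
polynomial decay of all derivatives up to order `q+2`. -/
def CondG1 (G : ℝ → ℝ → ℝ) (q : ℕ) : Prop :=
  ∃ M : ℕ, 0 < M ∧ ContDiff ℝ (q + 2 : ℕ) (fun x => G x 1) ∧
    ∀ j ≤ q + 2, ∃ B : ℝ, ∀ x : ℝ,
      (1 + |x| + x ^ 2) * (1 + |x|) ^ (M + 1) *
        |iteratedDeriv j (fun y => G y 1) x| ≤ B

/-- Condition (G2): scaling `G(x,t) = t^{-1/d} G(t^{-1/d}x, 1)`. -/
def CondG2 (G : ℝ → ℝ → ℝ) (d : ℝ) : Prop :=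
  ∀ x t : ℝ, 0 < t →
    G x t = t ^ (-(1 : ℝ) / d) * G (t ^ (-(1 : ℝ) / d) * x) 1

/-- Condition (G3): the semigroup (convolution) property. -/
def CondG3 (G : ℝ → ℝ → ℝ) : Prop :=
  ∀ x t τ : ℝ, 0 < τ → τ < t → G x t = ∫ y : ℝ, G (x - y) (t - τ) * G y τ

/-- Conditions (G). -/
def CondsG (G : ℝ → ℝ → ℝ) (q : ℕ) (d : ℝ) : Prop :=
  CondG1 G q ∧ CondG2 G d ∧ CondG3 G

/-- Hypotheses on the coefficient `c`: positive, locally integrable on `(1,∞)`,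
and `c(t) = t^p + o(t^p)` as `t → ∞`. -/
def CondC (c : ℝ → ℝ) (p : ℝ) : Prop :=
  0 < p ∧ (∀ t : ℝ, 1 < t → 0 < c t) ∧
    LocallyIntegrableOn c (Set.Ioi 1) ∧
    (fun t => c t - t ^ p) =o[atTop] fun t => t ^ p

/-- `s(t) = ∫₁ᵗ c(τ) dτ`. -/
def sF (c : ℝ → ℝ) (t : ℝ) : ℝ := ∫ τ in (1:ℝ)..t, c τ

/-- `r(t) = s(t) − (t^{p+1}−1)/(p+1)`. -/
def rF (c : ℝ → ℝ) (p t : ℝ) : ℝ := sF c t - (t ^ (p + 1) - 1) / (p + 1)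

/-- Hypothesis on `L₀`: `L₀ > 1` and `|r(L)|/L^{p+1} < 1/(4(p+1))` for `L > L₀`. -/
def CondL0 (c : ℝ → ℝ) (p L₀ : ℝ) : Prop :=
  1 < L₀ ∧ ∀ L : ℝ, L₀ < L → |rF c p L| / L ^ (p + 1) < 1 / (4 * (p + 1))

/-- `L₁ = max {L₀, 3^{1/(p+1)}}`. -/
def Lone (p L₀ : ℝ) : ℝ := max L₀ ((3:ℝ) ^ ((1:ℝ) / (p + 1)))

/-- `s_n(t) = (s(Lⁿt) − s(Lⁿ))/L^{n(p+1)}`. -/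
def sn (c : ℝ → ℝ) (p L : ℝ) (n : ℕ) (t : ℝ) : ℝ :=
  (sF c (L ^ n * t) - sF c (L ^ n)) / L ^ ((n : ℝ) * (p + 1))

/-- `u_f(x,t) = ∫ G(x−y, s_n(t)) f(y) dy`. -/
def linSol (G : ℝ → ℝ → ℝ) (c : ℝ → ℝ) (p L : ℝ) (n : ℕ) (f : ℝ → ℝ)
    (x t : ℝ) : ℝ :=
  ∫ y : ℝ, G (x - y) (sn c p L n t) * f y

/-- The linear RG operator `(R⁰_{L,n}f)(x) = L^{2(p+1)/d} u_f(L^{(p+1)/d}x, L)`. -/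
def RG0 (G : ℝ → ℝ → ℝ) (c : ℝ → ℝ) (p d L : ℝ) (n : ℕ) (f : ℝ → ℝ) :
    ℝ → ℝ := fun x =>
  L ^ (2 * (p + 1) / d) * linSol G c p L n f (L ^ ((p + 1) / d) * x) L

/-- `R⁰_{Lⁿ} = R⁰_{L,n−1} ∘ ⋯ ∘ R⁰_{L,0}`. -/
def RG0iter (G : ℝ → ℝ → ℝ) (c : ℝ → ℝ) (p d L : ℝ) :
    ℕ → (ℝ → ℝ) → ℝ → ℝ
  | 0 => fun f => f
  | n + 1 => fun f => RG0 G c p d L n (RG0iter G c p d L n f)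

/-- `G_p(x) = ∂ₓ G(x, 1/(p+1))`. -/
def Gp (G : ℝ → ℝ → ℝ) (p : ℝ) : ℝ → ℝ :=
  fun x => deriv (fun y => G y (1 / (p + 1))) x

/-- The nonlinearity `F(u,u_x)(y,τ) = Σ_j a_j u(y,τ)^j ∂ₓu(y,τ)`. -/
def Fnl (a : ℕ → ℝ) (u : ℝ → ℝ → ℝ) (y τ : ℝ) : ℝ :=
  ∑' j : ℕ, a j * u y τ ^ j * deriv (fun z => u z τ) y

/-- The coefficients define a series analytic at the origin with positive
radius of convergence. -/
def AnalyticCoeffs (a : ℕ → ℝ) : Prop :=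
  ∃ ρ : ℝ, 0 < ρ ∧ ∀ z : ℝ, |z| < ρ → Summable fun j : ℕ => |a j| * |z| ^ j

/-- `u` solves the nonlinear integral equation for all `t > 1`. -/
def SolvesNL (G : ℝ → ℝ → ℝ) (c : ℝ → ℝ) (lam : ℝ) (a : ℕ → ℝ)
    (f : ℝ → ℝ) (u : ℝ → ℝ → ℝ) : Prop :=
  ∀ x : ℝ, ∀ t : ℝ, 1 < t → u x t =
    (∫ y : ℝ, G (x - y) (sF c t) * f y) +
      lam * ∫ τ in (1:ℝ)..t, ∫ y : ℝ,
        G (x - y) (sF c t - sF c τ) * Fnl a u y τ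

/-- The norm `‖u‖_L = sup_{t∈[1,L]} ‖u(·,t)‖` on `B^{(L)}`. -/
def normL (q L : ℝ) (u : ℝ → ℝ → ℝ) : ℝ :=
  ⨆ t : Set.Icc (1:ℝ) L, bqNormR q fun x => u x (t : ℝ)

/-- `d_F = (2α+3)(p+1) − 2(p+1) − d`. -/
def dF (p d : ℝ) (α : ℕ) : ℝ := (2 * (α : ℝ) + 3) * (p + 1) - 2 * (p + 1) - d

/-- The generalized coupling constant `λ_n = L^{-(n/d)[(2α+3)(p+1)−2(p+1)−d]} λ`. -/
def lamn (lam p d L : ℝ) (α n : ℕ) : ℝ :=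
  L ^ (-((n : ℝ) / d) * dF p d α) * lam

/-- The renormalized nonlinearity `F_{L,n}`. -/
def FnlRen (a : ℕ → ℝ) (p d L : ℝ) (α n : ℕ) (u : ℝ → ℝ → ℝ)
    (y τ : ℝ) : ℝ :=
  ∑' j : ℕ, a j * L ^ (2 * (n : ℝ) / d * (p + 1) * ((α : ℝ) - (j : ℝ))) *
    u y τ ^ j * deriv (fun z => u z τ) y

/-- The rescaled solution `u_n(x,t) = L^{2n(p+1)/d} u(L^{n(p+1)/d}x, Lⁿt)`. -/
def resc (u : ℝ → ℝ → ℝ) (p d L : ℝ) (n : ℕ) (x t : ℝ) : ℝ :=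
  L ^ (2 * (n : ℝ) * (p + 1) / d) *
    u (L ^ ((n : ℝ) * (p + 1) / d) * x) (L ^ n * t)

/-- `u` solves the `n`-th renormalized integral equation on `[1,L]` with data `f`. -/
def SolvesRen (G : ℝ → ℝ → ℝ) (c : ℝ → ℝ) (lam p d L : ℝ) (a : ℕ → ℝ)
    (α n : ℕ) (f : ℝ → ℝ) (u : ℝ → ℝ → ℝ) : Prop :=
  ∀ x : ℝ, ∀ t ∈ Set.Icc (1:ℝ) L, u x t =
    (∫ y : ℝ, G (x - y) (sn c p L n t) * f y) +
      lamn lam p d L α n * ∫ τ in (1:ℝ)..t, ∫ y : ℝ,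
        G (x - y) (sn c p L n t - sn c p L n τ) * FnlRen a p d L α n u y τ

end

/-!
Up to rescaling the frequency, `FT f` is Mathlib's `𝓕 f`. Differentiating `j` times in `ω` brings
down a factor `xʲ`, and multiplying by `ωⁿ` amounts to differentiating `n` times in `x`. So
`|ω|ⁿ |∂_ωʲ f̂(ω)|` is controlled by the integrals of `|x|ⁱ |f⁽ᵐ⁾(x)|` with `i ≤ j` and `m ≤ n`, and
the decay in (G1) makes these finite for `i ≤ 2` and `m ≤ q + 2`. The two required bounds come from
`n = 0` and from `n = 2` together with `n = q + 2`.
-/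

section FourierBounds

open scoped FourierTransform Real

variable {f : ℝ → ℂ} {j n : ℕ}

lemma FT_eq_fourier_inv_two_pi_mul (f : ℝ → ℂ) : FT f = fun ω ↦ 𝓕 f ((2 * π)⁻¹ * ω) := by
  ext ω
  rw [Real.fourier_real_eq_integral_exp_smul, FT]
  congr! 3 with x
  push_cast
  field_simp

lemma iteratedDeriv_FT (hint : ∀ i ≤ j, Integrable fun x ↦ |x| ^ i * ‖f x‖) (ω : ℝ) :
    iteratedDeriv j (FT f) ω = (2 * π)⁻¹ ^ j • iteratedDeriv j (𝓕 f) ((2 * π)⁻¹ * ω) := by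
  have hcd : ContDiff ℝ j (𝓕 f) :=
    Real.contDiff_fourier (N := j) fun i hi ↦ hint i (by exact_mod_cast hi)
  rw [FT_eq_fourier_inv_two_pi_mul, iteratedDeriv_comp_const_smul hcd]

lemma abs_pow_mul_norm_iteratedDeriv_FT_le (hf : ContDiff ℝ n f)
    (hint : ∀ i ≤ j, ∀ m ≤ n, Integrable fun x ↦ |x| ^ i * ‖iteratedDeriv m f x‖) (ω : ℝ) :
    |ω| ^ n * ‖iteratedDeriv j (FT f) ω‖ ≤ (2 * π) ^ n * (2 * j + 2) ^ n *
      ∑ p ∈ Finset.range (j + 1) ×ˢ Finset.range (n + 1),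
        ∫ x, |x| ^ p.1 * ‖iteratedDeriv p.2 f x‖ := by
  set S : ℝ := ∑ p ∈ Finset.range (j + 1) ×ˢ Finset.range (n + 1),
    ∫ x, |x| ^ p.1 * ‖iteratedDeriv p.2 f x‖
  have hfourier (ξ : ℝ) : |ξ| ^ n * ‖iteratedDeriv j (𝓕 f) ξ‖ ≤
      (2 * π) ^ j * (2 * j + 2) ^ n * S := by
    simpa only [norm_iteratedFDeriv_eq_norm_iteratedDeriv, Real.norm_eq_abs] using!
      Real.pow_mul_norm_iteratedFDeriv_fourier_le (K := j) (N := n) hf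
        (fun i m hi hm ↦ by
          simpa only [norm_iteratedFDeriv_eq_norm_iteratedDeriv, Real.norm_eq_abs] using
            hint i (by exact_mod_cast hi) m (by exact_mod_cast hm)) le_rfl le_rfl ξ
  have hderiv := iteratedDeriv_FT fun i hi ↦ by simpa using hint i hi 0 n.zero_le
  obtain ⟨ξ, rfl⟩ : ∃ ξ, 2 * π * ξ = ω := ⟨(2 * π)⁻¹ * ω, mul_inv_cancel_left₀ (by positivity) ω⟩
  calc |2 * π * ξ| ^ n * ‖iteratedDeriv j (FT f) (2 * π * ξ)‖
      = (2 * π) ^ n * (2 * π)⁻¹ ^ j * (|ξ| ^ n * ‖iteratedDeriv j (𝓕 f) ξ‖) := by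
        rw [hderiv, inv_mul_cancel_left₀ (by positivity), norm_smul, norm_pow, Real.norm_eq_abs,
          abs_of_pos (by positivity : 0 < (2 * π)⁻¹), abs_mul,
          abs_of_pos (by positivity : 0 < 2 * π)]
        ring
    _ ≤ (2 * π) ^ n * (2 * π)⁻¹ ^ j * ((2 * π) ^ j * (2 * j + 2) ^ n * S) :=
        mul_le_mul_of_nonneg_left (hfourier ξ) (by positivity)
    _ = (2 * π) ^ n * (2 * j + 2) ^ n * S := by
        rw [inv_pow]
        field_simp

end FourierBounds

lemma integrable_of_one_add_norm_rpow_mul_norm_le {E F : Type*} [NormedAddCommGroup E]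
    [NormedSpace ℝ E] [FiniteDimensional ℝ E] [MeasurableSpace E] [BorelSpace E]
    [NormedAddCommGroup F] {μ : Measure E} [μ.IsAddHaarMeasure] {f : E → F} {r B : ℝ}
    (hr : Module.finrank ℝ E < r) (hf : AEStronglyMeasurable f μ)
    (hB : ∀ x, (1 + ‖x‖) ^ r * ‖f x‖ ≤ B) : Integrable f μ := by
  refine ((integrable_one_add_norm hr).const_mul B).mono' hf (.of_forall fun x ↦ ?_)
  have hpos : 0 < 1 + ‖x‖ := by positivity
  rw [Real.rpow_neg hpos.le, ← div_eq_mul_inv, le_div_iff₀' (Real.rpow_pos_of_pos hpos r)]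
  exact hB x

lemma norm_iteratedDeriv_linearIsometry_comp {𝕜 E F : Type*} [NontriviallyNormedField 𝕜]
    [NormedAddCommGroup E] [NormedSpace 𝕜 E] [NormedAddCommGroup F] [NormedSpace 𝕜 F]
    (L : E →ₗᵢ[𝕜] F) {g : 𝕜 → E} {m : ℕ} {x : 𝕜} (hg : ContDiffAt 𝕜 m g x) :
    ‖iteratedDeriv m (L ∘ g) x‖ = ‖iteratedDeriv m g x‖ := by
  simpa only [norm_iteratedFDeriv_eq_norm_iteratedDeriv] using
    L.norm_iteratedFDeriv_comp_left hg le_rfl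

namespace CondG1

variable {G : ℝ → ℝ → ℝ} {q i m : ℕ}

lemma contDiff_ofReal (hG : CondG1 G q) : ContDiff ℝ (q + 2 : ℕ) fun x ↦ (G x 1 : ℂ) :=
  let ⟨_, _, hcd, _⟩ := hG
  Complex.ofRealCLM.contDiff.comp hcd

lemma integrable_abs_pow_mul_norm_iteratedDeriv (hG : CondG1 G q) (hi : i ≤ 2) (hm : m ≤ q + 2) :
    Integrable fun x ↦ |x| ^ i * ‖iteratedDeriv m (fun y ↦ G y 1) x‖ := by
  obtain ⟨M, hM, hcd, hdecay⟩ := hG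
  obtain ⟨B, hB⟩ := hdecay m hm
  have hcont : Continuous (iteratedDeriv m fun y ↦ G y 1) :=
    hcd.continuous_iteratedDeriv m (by exact_mod_cast hm)
  refine integrable_of_one_add_norm_rpow_mul_norm_le (r := 2) (B := B)
    (by norm_num) (by fun_prop) fun x ↦ ?_
  have hpow : |x| ^ i ≤ 1 + |x| + x ^ 2 := by
    rw [← sq_abs x]
    interval_cases i <;> nlinarith [abs_nonneg x]
  have hweight : (1 + |x|) ^ 2 ≤ (1 + |x|) ^ (M + 1) :=
    pow_le_pow_right₀ (le_add_of_nonneg_right (abs_nonneg x)) (by omega)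
  calc (1 + ‖x‖) ^ (2 : ℝ) * ‖|x| ^ i * ‖iteratedDeriv m (fun y ↦ G y 1) x‖‖
      = |x| ^ i * (1 + |x|) ^ 2 * |iteratedDeriv m (fun y ↦ G y 1) x| := by
        simp only [Real.rpow_two, norm_mul, norm_pow, Real.norm_eq_abs, abs_abs]
        ring
    _ ≤ (1 + |x| + x ^ 2) * (1 + |x|) ^ (M + 1) * |iteratedDeriv m (fun y ↦ G y 1) x| := by gcongr
    _ ≤ B := hB x

lemma integrable_abs_pow_mul_norm_iteratedDeriv_ofReal (hG : CondG1 G q) (hi : i ≤ 2)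
    (hm : m ≤ q + 2) :
    Integrable fun x ↦ |x| ^ i * ‖iteratedDeriv m (fun y ↦ (G y 1 : ℂ)) x‖ := by
  refine (hG.integrable_abs_pow_mul_norm_iteratedDeriv hi hm).congr (.of_forall fun x ↦ ?_)
  obtain ⟨_, _, hcd, _⟩ := hG
  have hcdAt : ContDiffAt ℝ m (fun y ↦ G y 1) x := (hcd.of_le (by exact_mod_cast hm)).contDiffAt
  exact congrArg (|x| ^ i * ·)
    (norm_iteratedDeriv_linearIsometry_comp Complex.ofRealLI hcdAt).symm

end CondG1

theorem fourier_kernel_bounds_general {f : ℝ → ℂ} {j q r : ℕ} (hf : ContDiff ℝ (q + r : ℕ) f)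
    (hint : ∀ i ≤ j, ∀ m ≤ q + r, Integrable fun x ↦ |x| ^ i * ‖iteratedDeriv m f x‖) :
    (∃ K : ℝ, ∀ ω : ℝ, ‖iteratedDeriv j (FT f) ω‖ ≤ K) ∧
      ∃ C : ℝ, ∀ ω : ℝ, (1 + |ω| ^ q) * |ω| ^ r * ‖iteratedDeriv j (FT f) ω‖ ≤ C := by
  have hbound {n : ℕ} (hn : n ≤ q + r) :
      ∃ C, ∀ ω, |ω| ^ n * ‖iteratedDeriv j (FT f) ω‖ ≤ C :=
    ⟨_, abs_pow_mul_norm_iteratedDeriv_FT_le (hf.of_le (by exact_mod_cast hn))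
      fun i hi m hm ↦ hint i hi m (hm.trans hn)⟩
  obtain ⟨K, hK⟩ := hbound (Nat.zero_le _)
  obtain ⟨C₁, hC₁⟩ := hbound (Nat.le_add_left r q)
  obtain ⟨C₂, hC₂⟩ := hbound le_rfl
  refine ⟨⟨K, fun ω ↦ by simpa using hK ω⟩, C₁ + C₂, fun ω ↦ ?_⟩
  calc (1 + |ω| ^ q) * |ω| ^ r * ‖iteratedDeriv j (FT f) ω‖
      = |ω| ^ r * ‖iteratedDeriv j (FT f) ω‖ + |ω| ^ (q + r) * ‖iteratedDeriv j (FT f) ω‖ := by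
        ring
    _ ≤ C₁ + C₂ := add_le_add (hC₁ ω) (hC₂ ω)

/-- Lemma 2.2: boundedness and decay of `Ĝ^{(j)}(·,1)`,
`j = 0, 1, 2`. -/
theorem fourier_kernel_bounds
    (G : ℝ → ℝ → ℝ) (q : ℕ) (hq : 1 < q) (hG1 : CondG1 G q) :
    ∀ j : ℕ, j ≤ 2 →
      (∃ K : ℝ, ∀ ω : ℝ, ‖iteratedDeriv j (FTr fun x => G x 1) ω‖ ≤ K) ∧
        ∃ C : ℝ, ∀ ω : ℝ,
          (1 + |ω| ^ (q : ℝ)) * |ω| ^ 2 *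
            ‖iteratedDeriv j (FTr fun x => G x 1) ω‖ ≤ C := by
  intro j hj
  simpa only [FTr, Real.rpow_natCast] using fourier_kernel_bounds_general hG1.contDiff_ofReal
    fun i hi m hm ↦ hG1.integrable_abs_pow_mul_norm_iteratedDeriv_ofReal (hi.trans hj) hm
end

section
/- Suppose G : ℝ × (0,∞) → ℝ satisfies properties (G1), (G2) and (G3). Given 0 < t₁ < t₂, then for all ω ∈ ℝ: (i) |Ĝ(ω,t₂)| ≤ K₀|Ĝ(ω,t₁)|; (ii) |∂_ω Ĝ(ω,t₂)| ≤ K₁(t₂−t₁)^{1/d}|Ĝ(ω,t₁)| + K₀|∂_ω Ĝ(ω,t₁)|; (iii) |∂_ω² Ĝ(ω,t₂)| ≤ K₂(t₂−t₁)^{2/d}|Ĝ(ω,t₁)| + 2K₁(t₂−t₁)^{1/d}|∂_ω Ĝ(ω,t₁)| + K₀|∂_ω² Ĝ(ω,t₁)|. -/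
open MeasureTheory Filter Topology

/-- `K_j = sup_ω |∂_ω^j Ĝ(ω,1)|`. -/
noncomputable def Ksup (G : ℝ → ℝ → ℝ) (j : ℕ) : ℝ :=
  ⨆ ω : ℝ, ‖iteratedDeriv j (FTr fun x => G x 1) ω‖

/-! By the semigroup property, `Ĝ(·, t₂) = Ĝ(·, t₂ - t₁) Ĝ(·, t₁)`, and by self-similarity
`Ĝ(ω, s) = Ĝ(s^γ ω, 1)` with `γ = 1/d`, so the `k`-th derivative of `Ĝ(·, s)` is bounded by
`K_k s^(γ k)` as long as `G(·, 1)` has absolute moments up to order `k`. The bounds are Leibniz's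
rule for the `n`-th derivative of the product, with `n = 0, 1, 2`. -/

section Moments

variable {E : Type*} [NormedAddCommGroup E] [NormedSpace ℝ E] {f : ℝ → E} {n : ℕ}

/-- The moments `∫ xᵏ f(x) dx` of order `k ≤ n` converge absolutely; for such `f` the Fourier
transform is `Cⁿ` with bounded derivatives. -/
def MomentsIntegrable (f : ℝ → E) (n : ℕ) : Prop :=
  ∀ k ≤ n, Integrable fun x : ℝ => x ^ k • f x

lemma MomentsIntegrable.integrable (hf : MomentsIntegrable f n) : Integrable f := by
  simpa using hf 0 n.zero_le

lemma MomentsIntegrable.ofReal {f : ℝ → ℝ} (hf : MomentsIntegrable f n) :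
    MomentsIntegrable (fun x => (f x : ℂ)) n := fun k hk => by
  simpa using (hf k hk).ofReal (𝕜 := ℂ)

lemma momentsIntegrable_of_decay (hf : AEStronglyMeasurable f) {B : ℝ}
    (hB : ∀ x, (1 + |x|) ^ (n + 2) * ‖f x‖ ≤ B) : MomentsIntegrable f n := by
  intro k hk
  have hmeas : AEStronglyMeasurable fun x : ℝ => x ^ k • f x :=
    (continuous_pow k).aestronglyMeasurable.smul hf
  refine (integrable_inv_one_add_sq.const_mul B).mono' hmeas (Eventually.of_forall fun x => ?_)
  have hweight : (1 + x ^ 2) * |x| ^ k ≤ (1 + |x|) ^ (n + 2) := calc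
    (1 + x ^ 2) * |x| ^ k ≤ (1 + |x|) ^ 2 * (1 + |x|) ^ k := by
      gcongr
      · nlinarith [abs_nonneg x, sq_abs x]
      · linarith
    _ = (1 + |x|) ^ (k + 2) := by ring
    _ ≤ (1 + |x|) ^ (n + 2) := pow_le_pow_right₀ (by linarith [abs_nonneg x]) (by lia)
  rw [← div_eq_mul_inv, le_div_iff₀ (by positivity)]
  calc ‖x ^ k • f x‖ * (1 + x ^ 2) = (1 + x ^ 2) * |x| ^ k * ‖f x‖ := by
        rw [norm_smul, norm_pow, Real.norm_eq_abs]; ring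
    _ ≤ (1 + |x|) ^ (n + 2) * ‖f x‖ := by gcongr
    _ ≤ B := hB x

end Moments

section FourierTransform

open scoped FourierTransform Convolution

variable {f g : ℝ → ℂ} {n k : ℕ}

lemma FT_eq_fourier (f : ℝ → ℂ) (ω : ℝ) : FT f ω = 𝓕 f ((2 * Real.pi)⁻¹ * ω) := by
  rw [Real.fourier_real_eq_integral_exp_smul]
  refine integral_congr_ae (Eventually.of_forall fun x => ?_)
  have hphase : -2 * Real.pi * x * ((2 * Real.pi)⁻¹ * ω) = -(ω * x) := by
    field_simp [Real.pi_ne_zero]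
  simp only [hphase, smul_eq_mul]
  push_cast
  ring_nf

lemma norm_FT_le_integral_norm (f : ℝ → ℂ) (ω : ℝ) : ‖FT f ω‖ ≤ ∫ x, ‖f x‖ := by
  rw [FT_eq_fourier]
  exact VectorFourier.norm_fourierIntegral_le_integral_norm _ _ _ _ _

lemma FT_comp_mul_left (f : ℝ → ℂ) {a : ℝ} (ha : a ≠ 0) (ω : ℝ) :
    FT (fun x => f (a * x)) ω = |a⁻¹| • FT f (a⁻¹ * ω) := by
  have hphase (x : ℝ) : Complex.I * ω * x = Complex.I * (a⁻¹ * ω : ℝ) * (a * x : ℝ) := by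
    have : (a : ℂ) ≠ 0 := mod_cast ha
    push_cast
    field_simp
  simp only [FT, hphase]
  exact Measure.integral_comp_mul_left
    (fun y : ℝ => Complex.exp (-(Complex.I * (a⁻¹ * ω : ℝ) * y)) * f y) a

lemma FT_convolution (hf : Integrable f) (hg : Integrable g) (ω : ℝ) :
    FT (f ⋆[ContinuousLinearMap.mul ℂ ℂ] g) ω = FT f ω * FT g ω := by
  simp only [FT_eq_fourier, Real.fourier_mul_convolution_eq hf hg]

lemma MomentsIntegrable.contDiff_fourier {E : Type*} [NormedAddCommGroup E] [NormedSpace ℂ E]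
    {f : ℝ → E} (hf : MomentsIntegrable f n) : ContDiff ℝ n (𝓕 f) :=
  Real.contDiff_fourier fun k hk => by simpa [norm_smul] using (hf k (mod_cast hk)).norm

lemma MomentsIntegrable.contDiff_FT (hf : MomentsIntegrable f n) : ContDiff ℝ n (FT f) := by
  rw [funext (FT_eq_fourier f)]
  exact hf.contDiff_fourier.comp (contDiff_const.mul contDiff_id)

lemma MomentsIntegrable.iteratedDeriv_FT (hf : MomentsIntegrable f n) (hk : k ≤ n) :
    iteratedDeriv k (FT f) = FT fun x => (-Complex.I * x) ^ k * f x := by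
  have hfourier : ContDiff ℝ k (𝓕 f) := hf.contDiff_fourier.of_le (Nat.cast_le.2 hk)
  ext ω
  rw [funext (FT_eq_fourier f), iteratedDeriv_comp_const_smul hfourier,
    Real.iteratedDeriv_fourier (fun j hj => hf j (mod_cast hj)) (Nat.cast_le.2 hk), FT_eq_fourier]
  simp only [Real.fourier_real_eq_integral_exp_smul, ← integral_smul]
  have hfactor (x : ℝ) : (-Complex.I * x) ^ k =
      (2 * Real.pi : ℂ)⁻¹ ^ k * (-2 * Real.pi * Complex.I * x) ^ k := by
    have hpi : (Real.pi : ℂ) ≠ 0 := mod_cast Real.pi_ne_zero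
    rw [← mul_pow]
    field_simp
  congr with x
  simp only [hfactor, Complex.real_smul, smul_eq_mul]
  push_cast
  ring

lemma MomentsIntegrable.bddAbove_norm_iteratedDeriv_FT (hf : MomentsIntegrable f n) (hk : k ≤ n) :
    BddAbove (Set.range fun ω => ‖iteratedDeriv k (FT f) ω‖) := by
  rw [hf.iteratedDeriv_FT hk]
  exact ⟨_, Set.forall_mem_range.2 (norm_FT_le_integral_norm _)⟩

end FourierTransform

section Kernel

open scoped Convolution

variable {G : ℝ → ℝ → ℝ} {γ : ℝ} {n k : ℕ} {t : ℝ}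

/-- The scaling law `G(x, t) = t^{-γ} G(t^{-γ} x, 1)`: condition (G2) with `1 / d` replaced by an
arbitrary real exponent. -/
def SelfSimilar (G : ℝ → ℝ → ℝ) (γ : ℝ) : Prop :=
  ∀ x t : ℝ, 0 < t → G x t = t ^ (-γ) * G (t ^ (-γ) * x) 1

lemma CondG2.selfSimilar {d : ℝ} (hG : CondG2 G d) : SelfSimilar G (1 / d) := by
  simpa only [CondG2, SelfSimilar, neg_div] using hG

lemma CondG1.momentsIntegrable_two {q : ℕ} (hG : CondG1 G q) :
    MomentsIntegrable (fun x => G x 1) 2 := by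
  obtain ⟨M, hM, hsmooth, hdecay⟩ := hG
  obtain ⟨B, hB⟩ := hdecay 0 (Nat.zero_le _)
  simp only [iteratedDeriv_zero] at hB
  refine momentsIntegrable_of_decay hsmooth.continuous.aestronglyMeasurable (B := 2 * B) fun x => ?_
  have hsq : (1 + |x|) ^ 2 ≤ 2 * (1 + |x| + x ^ 2) := by nlinarith [abs_nonneg x, sq_abs x]
  have hpow : (1 + |x|) ^ 2 ≤ (1 + |x|) ^ (M + 1) :=
    pow_le_pow_right₀ (by linarith [abs_nonneg x]) (by lia)
  calc (1 + |x|) ^ (2 + 2) * ‖G x 1‖ = (1 + |x|) ^ 2 * (1 + |x|) ^ 2 * |G x 1| := by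
        rw [pow_add, Real.norm_eq_abs]
    _ ≤ 2 * (1 + |x| + x ^ 2) * (1 + |x|) ^ (M + 1) * |G x 1| := by gcongr
    _ = 2 * ((1 + |x| + x ^ 2) * (1 + |x|) ^ (M + 1) * |G x 1|) := by ring
    _ ≤ 2 * B := by gcongr; exact hB x

lemma SelfSimilar.integrable (hG : SelfSimilar G γ) (hint : Integrable fun x => G x 1)
    (ht : 0 < t) : Integrable fun x => G x t := by
  rw [funext fun x => hG x t ht]
  exact (hint.comp_mul_left' (Real.rpow_pos_of_pos ht _).ne').const_mul _

lemma SelfSimilar.FTr_eq (hG : SelfSimilar G γ) (ht : 0 < t) :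
    FTr (fun x => G x t) = fun ω => FTr (fun x => G x 1) (t ^ γ * ω) := by
  have hpos : 0 < t ^ (-γ) := Real.rpow_pos_of_pos ht _
  ext ω
  calc FTr (fun x => G x t) ω
      = t ^ (-γ) • FT (fun x => (G (t ^ (-γ) * x) 1 : ℂ)) ω := by
        simp only [FTr, FT, ← integral_smul, Complex.real_smul, hG _ t ht, Complex.ofReal_mul,
          mul_left_comm]
    _ = FTr (fun x => G x 1) ((t ^ (-γ))⁻¹ * ω) := by
        rw [FT_comp_mul_left (fun y => (G y 1 : ℂ)) hpos.ne', abs_of_pos (inv_pos.2 hpos),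
          smul_inv_smul₀ hpos.ne', FTr]
    _ = FTr (fun x => G x 1) (t ^ γ * ω) := by rw [Real.rpow_neg ht.le, inv_inv]

lemma SelfSimilar.contDiff_FTr (hG : SelfSimilar G γ) (hmom : MomentsIntegrable (fun x => G x 1) n)
    (ht : 0 < t) : ContDiff ℝ n (FTr fun x => G x t) := by
  rw [hG.FTr_eq ht]
  exact hmom.ofReal.contDiff_FT.comp (contDiff_const.mul contDiff_id)

lemma norm_iteratedDeriv_FTr_le_Ksup (hmom : MomentsIntegrable (fun x => G x 1) n) (hk : k ≤ n)
    (ω : ℝ) : ‖iteratedDeriv k (FTr fun x => G x 1) ω‖ ≤ Ksup G k :=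
  le_ciSup (hmom.ofReal.bddAbove_norm_iteratedDeriv_FT hk) ω

lemma SelfSimilar.norm_iteratedDeriv_FTr_le (hG : SelfSimilar G γ)
    (hmom : MomentsIntegrable (fun x => G x 1) n) (hk : k ≤ n) (ht : 0 < t) (ω : ℝ) :
    ‖iteratedDeriv k (FTr fun x => G x t) ω‖ ≤ Ksup G k * t ^ (γ * k) := by
  have hdiff : ContDiff ℝ k (FTr fun x => G x 1) :=
    hmom.ofReal.contDiff_FT.of_le (Nat.cast_le.2 hk)
  rw [hG.FTr_eq ht, iteratedDeriv_comp_const_smul hdiff, norm_smul, norm_pow,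
    Real.norm_of_nonneg (Real.rpow_nonneg ht.le _), ← Real.rpow_mul_natCast ht.le, mul_comm]
  gcongr
  exact norm_iteratedDeriv_FTr_le_Ksup hmom hk _

lemma CondG3.FTr_eq_mul (hG : CondG3 G) {t₁ t₂ : ℝ} (h1 : 0 < t₁) (h12 : t₁ < t₂)
    (hint₁ : Integrable fun x => G x t₁) (hint₂ : Integrable fun x => G x (t₂ - t₁)) :
    FTr (fun x => G x t₂) = FTr (fun x => G x (t₂ - t₁)) * FTr (fun x => G x t₁) := by
  have hconv : (fun x => (G x t₂ : ℂ)) =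
      (fun x => (G x t₁ : ℂ)) ⋆[ContinuousLinearMap.mul ℂ ℂ] fun x => (G x (t₂ - t₁) : ℂ) := by
    ext x
    rw [hG x t₂ t₁ h1 h12, ← integral_complex_ofReal]
    simp only [convolution_def, ContinuousLinearMap.mul_apply', Complex.ofReal_mul, mul_comm]
  ext ω
  rw [FTr, hconv]
  exact (FT_convolution hint₁.ofReal hint₂.ofReal ω).trans (mul_comm _ _)

theorem fourier_kernel_decrease_general (hmom : MomentsIntegrable (fun x => G x 1) n)
    (hscale : SelfSimilar G γ) (hsemi : CondG3 G) {t₁ t₂ : ℝ} (h1 : 0 < t₁) (h12 : t₁ < t₂)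
    (ω : ℝ) :
    ‖iteratedDeriv n (FTr fun x => G x t₂) ω‖ ≤
      ∑ i ∈ Finset.range (n + 1), n.choose i * (Ksup G i * (t₂ - t₁) ^ (γ * i)) *
        ‖iteratedDeriv (n - i) (FTr fun x => G x t₁) ω‖ := by
  have hs : 0 < t₂ - t₁ := sub_pos.2 h12
  rw [hsemi.FTr_eq_mul h1 h12 (hscale.integrable hmom.integrable h1)
      (hscale.integrable hmom.integrable hs),
    iteratedDeriv_mul (hscale.contDiff_FTr hmom hs).contDiffAt
      (hscale.contDiff_FTr hmom h1).contDiffAt]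
  refine norm_sum_le_of_le _ fun i hi => ?_
  rw [norm_mul, norm_mul, RCLike.norm_natCast]
  gcongr
  exact hscale.norm_iteratedDeriv_FTr_le hmom (Finset.mem_range_succ_iff.1 hi) hs ω

end Kernel

/-- Lemma 2.3: monotone-type bounds for `Ĝ` and its first two
derivatives at two times `0 < t₁ < t₂`. -/
theorem fourier_kernel_decrease
    (G : ℝ → ℝ → ℝ) (q : ℕ) (d : ℝ) (hq : 1 < q) (hd : 0 < d)
    (hG : CondsG G q d) (t₁ t₂ : ℝ) (h1 : 0 < t₁) (h12 : t₁ < t₂) :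
    ∀ ω : ℝ,
      ‖FTr (fun x => G x t₂) ω‖ ≤ Ksup G 0 * ‖FTr (fun x => G x t₁) ω‖ ∧
      ‖deriv (FTr fun x => G x t₂) ω‖ ≤
        Ksup G 1 * (t₂ - t₁) ^ ((1:ℝ)/d) * ‖FTr (fun x => G x t₁) ω‖ +
          Ksup G 0 * ‖deriv (FTr fun x => G x t₁) ω‖ ∧
      ‖deriv (deriv (FTr fun x => G x t₂)) ω‖ ≤
        Ksup G 2 * (t₂ - t₁) ^ ((2:ℝ)/d) * ‖FTr (fun x => G x t₁) ω‖ +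
          2 * Ksup G 1 * (t₂ - t₁) ^ ((1:ℝ)/d) *
            ‖deriv (FTr fun x => G x t₁) ω‖ +
          Ksup G 0 * ‖deriv (deriv (FTr fun x => G x t₁)) ω‖ := by
  intro ω
  obtain ⟨hdecay, hscale, hsemi⟩ := hG
  have leibniz (n : ℕ) (hn : n ≤ 2) := fourier_kernel_decrease_general
    (fun k hk => hdecay.momentsIntegrable_two k (hk.trans hn)) hscale.selfSimilar hsemi h1 h12 ω
  have hexp : 2 / d = d⁻¹ * 2 := by ring
  refine ⟨by simpa using leibniz 0 zero_le_two, ?_, ?_⟩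
  · simpa [Finset.sum_range_succ'] using leibniz 1 one_le_two
  · simpa [Finset.sum_range_succ', iteratedDeriv_succ, hexp, mul_assoc, one_add_one_eq_two]
      using leibniz 2 le_rfl
end

section
/- For every L > L₁ and every integer n ≥ 0, the rescaled time function satisfies 1/[6(p+1)] < s_n(L)/L^{p+1} < 3/[2(p+1)]. -/
open MeasureTheory Filter Topology

/-!
Since `s(t) = (t^{p+1} - 1)/(p+1) + r(t)`, the leading part of `s` rescales to itself, and `s_n(t)`
differs from `(t^{p+1} - 1)/(p+1)` only by the rescaled difference `r(Lⁿt) - r(Lⁿ)`. For `L, t > L₀`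
this error is below `(t^{p+1} + 1)/(4(p+1))`, which at `t = L` is less than half of the leading part
because `L^{p+1} > 3`.
-/

theorem rF_one (c : ℝ → ℝ) (p : ℝ) : rF c p 1 = 0 := by
  simp [rF, sF]

theorem sn_eq_add_rF (c : ℝ → ℝ) {p L t : ℝ} (hL : 0 < L) (ht : 0 ≤ t) (n : ℕ) :
    sn c p L n t =
      (t ^ (p + 1) - 1) / (p + 1) + (rF c p (L ^ n * t) - rF c p (L ^ n)) / (L ^ n) ^ (p + 1) := by
  have hscale : L ^ ((n : ℝ) * (p + 1)) = (L ^ n) ^ (p + 1) := by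
    rw [Real.rpow_mul hL.le, Real.rpow_natCast]
  have hscale_ne : (L ^ n) ^ (p + 1) ≠ 0 := by positivity
  rw [sn, rF, rF, hscale, Real.mul_rpow (pow_nonneg hL.le n) ht]
  field_simp [hscale_ne]
  ring

theorem three_lt_rpow_of_Lone_lt {p L₀ L : ℝ} (hp : -1 < p) (hL : Lone p L₀ < L) :
    3 < L ^ (p + 1) := by
  have hroot : (3 : ℝ) ^ (p + 1)⁻¹ < L := one_div (p + 1) ▸ (le_max_right _ _).trans_lt hL
  have hL_nonneg : 0 ≤ L := (Real.rpow_nonneg zero_le_three _).trans hroot.le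
  exact (Real.rpow_inv_lt_iff_of_pos zero_le_three hL_nonneg (by linarith)).mp hroot

namespace CondL0

variable {c : ℝ → ℝ} {p L₀ L t : ℝ}

theorem pos_of_lt (h : CondL0 c p L₀) (ht : L₀ < t) : 0 < t :=
  zero_lt_one.trans (h.1.trans ht)

theorem neg_one_lt (h : CondL0 c p L₀) : -1 < p := by
  have hL₀ : L₀ < L₀ + 1 := lt_add_one L₀
  have hpos : 0 < L₀ + 1 := h.pos_of_lt hL₀
  have hbound : 0 < 1 / (4 * (p + 1)) := lt_of_le_of_lt (by positivity) (h.2 (L₀ + 1) hL₀)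
  linarith [one_div_pos.mp hbound]

theorem abs_rF_lt (h : CondL0 c p L₀) (ht : L₀ < t) :
    |rF c p t| < t ^ (p + 1) / (4 * (p + 1)) := by
  have hpow : 0 < t ^ (p + 1) := Real.rpow_pos_of_pos (h.pos_of_lt ht) _
  simpa only [one_div_mul_eq_div] using (div_lt_iff₀ hpow).mp (h.2 t ht)

theorem abs_rF_pow_lt (h : CondL0 c p L₀) (hL : L₀ < L) (n : ℕ) :
    |rF c p (L ^ n)| < (L ^ n) ^ (p + 1) / (4 * (p + 1)) := by
  rcases eq_or_ne n 0 with rfl | hn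
  · have hp : 0 < p + 1 := neg_lt_iff_pos_add.mp h.neg_one_lt
    rw [pow_zero, rF_one, abs_zero, Real.one_rpow]
    positivity
  · exact h.abs_rF_lt (hL.trans_le (le_self_pow₀ (h.1.trans hL).le hn))

theorem abs_sn_sub_lt (h : CondL0 c p L₀) (hL : L₀ < L) (ht : L₀ < t) (n : ℕ) :
    |sn c p L n t - (t ^ (p + 1) - 1) / (p + 1)| < (t ^ (p + 1) + 1) / (4 * (p + 1)) := by
  have hL_pos : 0 < L := h.pos_of_lt hL
  have ht_pos : 0 < t := h.pos_of_lt ht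
  have hscale : 0 < (L ^ n) ^ (p + 1) := by positivity
  have ht_le : t ≤ L ^ n * t :=
    le_mul_of_one_le_left ht_pos.le (one_le_pow₀ (h.1.trans hL).le)
  rw [sn_eq_add_rF c hL_pos ht_pos.le, add_sub_cancel_left, abs_div, abs_of_pos hscale,
    div_lt_iff₀ hscale]
  calc |rF c p (L ^ n * t) - rF c p (L ^ n)|
      ≤ |rF c p (L ^ n * t)| + |rF c p (L ^ n)| := abs_sub _ _
    _ < (L ^ n * t) ^ (p + 1) / (4 * (p + 1)) + (L ^ n) ^ (p + 1) / (4 * (p + 1)) :=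
        add_lt_add (h.abs_rF_lt (ht.trans_le ht_le)) (h.abs_rF_pow_lt hL n)
    _ = (t ^ (p + 1) + 1) / (4 * (p + 1)) * (L ^ n) ^ (p + 1) := by
        rw [Real.mul_rpow (by positivity) ht_pos.le]
        ring

end CondL0

theorem sn_bounds_general {c : ℝ → ℝ} {p L₀ L : ℝ} (hL₀ : CondL0 c p L₀) (hL : Lone p L₀ < L)
    (n : ℕ) :
    1 / (6 * (p + 1)) < sn c p L n L / L ^ (p + 1) ∧
      sn c p L n L / L ^ (p + 1) < 3 / (2 * (p + 1)) := by
  have hL₀L : L₀ < L := (le_max_left _ _).trans_lt hL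
  have hp : 0 < p + 1 := neg_lt_iff_pos_add.mp hL₀.neg_one_lt
  have hpow : 3 < L ^ (p + 1) := three_lt_rpow_of_Lone_lt hL₀.neg_one_lt hL
  obtain ⟨hlower, hupper⟩ := abs_lt.mp (hL₀.abs_sn_sub_lt hL₀L hL₀L n)
  have hlower_const : 1 / (6 * (p + 1)) * L ^ (p + 1) <
      (L ^ (p + 1) - 1) / (p + 1) - (L ^ (p + 1) + 1) / (4 * (p + 1)) := by
    field_simp
    linarith
  have hupper_const : (L ^ (p + 1) - 1) / (p + 1) + (L ^ (p + 1) + 1) / (4 * (p + 1)) <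
      3 / (2 * (p + 1)) * L ^ (p + 1) := by
    field_simp
    linarith
  have hpow_pos : 0 < L ^ (p + 1) := zero_lt_three.trans hpow
  rw [lt_div_iff₀ hpow_pos, div_lt_iff₀ hpow_pos]
  constructor <;> linarith

/-- estimate (2.12): bounds for `s_n(L)/L^{p+1}` for `L > L₁`. -/
theorem sn_bounds (c : ℝ → ℝ) (p L₀ : ℝ) (hc : CondC c p)
    (hL₀ : CondL0 c p L₀) :
    ∀ L : ℝ, Lone p L₀ < L → ∀ n : ℕ,
      1 / (6 * (p + 1)) < sn c p L n L / L ^ (p + 1) ∧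
        sn c p L n L / L ^ (p + 1) < 3 / (2 * (p + 1)) := fun _ hL n =>
  sn_bounds_general hL₀ hL n
end
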